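/- arXiv:1207.5295 — 3 statements merged into one kernel-verified Lean document; each statement's English description precedes it below -/
import Mathlib

section
/- Let A, B, D ∈ G(Z,C) and z* ∈ C⁻ \ {0}. Then (A −_{z*} D) ⊕ B ⊆ (A ⊕ B) −_{z*} D. The inclusion is strict if and only if either B = D = ∅, or B ⊕ H(z*) = D ⊕ H(z*) = Z and A ⊕ H(z*) ∉ {Z, ∅}. -/
open Set Topology Pointwise

noncomputable section

variable {X Z : Type*}

/-- The family `G(Z,C)` of subsets `A` with `A = cl co (A + C)`. -/
def Gset [AddCommGroup Z] [Module ℝ Z] [TopologicalSpace Z] (C : Set Z) : Set (Set Z) :=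
  {A | A = closure (convexHull ℝ (A + C))}

/-- `A ⊕ B = cl (A + B)` (Minkowski sum, with `A + ∅ = ∅`). -/
def oplus [AddCommGroup Z] [TopologicalSpace Z] (A B : Set Z) : Set Z :=
  closure (A + B)

/-- The homogeneous closed half-space `H(z*) = {z : z*(z) ≤ 0}`. -/
def Hset [TopologicalSpace Z] [AddCommGroup Z] [Module ℝ Z] (zs : Z →L[ℝ] ℝ) : Set Z :=
  {z | zs z ≤ 0}

/-- `A −_{z*} B = {z : B + z ⊆ A ⊕ H(z*)}`. -/
def resid [TopologicalSpace Z] [AddCommGroup Z] [Module ℝ Z]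
    (zs : Z →L[ℝ] ℝ) (A B : Set Z) : Set Z :=
  {z | ∀ b ∈ B, b + z ∈ oplus A (Hset zs)}

/-- Convexity of a set-valued function: `f(t x₁ + (1-t) x₂) ⊇ t f(x₁) ⊕ (1-t) f(x₂)`. -/
def ConvexSV [AddCommGroup X] [Module ℝ X] [TopologicalSpace Z] [AddCommGroup Z] [Module ℝ Z]
    (f : X → Set Z) : Prop :=
  ∀ x₁ x₂ : X, ∀ t : ℝ, 0 < t → t < 1 →
    oplus (t • f x₁) ((1 - t) • f x₂) ⊆ f (t • x₁ + (1 - t) • x₂)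

/-- Directional derivative `f'_{z*}(x₀, x) = ⋂_{s>0} cl ⋃_{0<t<s} (1/t)(f(x₀+tx) −_{z*} f(x₀))`. -/
def dirDer [AddCommGroup X] [Module ℝ X] [TopologicalSpace Z] [AddCommGroup Z] [Module ℝ Z]
    (zs : Z →L[ℝ] ℝ) (f : X → Set Z) (x₀ x : X) : Set Z :=
  ⋂ s ∈ Ioi (0:ℝ), closure (⋃ t ∈ Ioo (0:ℝ) s, (1 / t) • resid zs (f (x₀ + t • x)) (f x₀))

/-- `S_{(x*,z*)}(x) = {z : x*(x) + z*(z) ≤ 0}`. -/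
def Sfun [TopologicalSpace X] [AddCommGroup X] [Module ℝ X]
    [TopologicalSpace Z] [AddCommGroup Z] [Module ℝ Z]
    (xs : X →L[ℝ] ℝ) (zs : Z →L[ℝ] ℝ) (x : X) : Set Z :=
  {z | xs x + zs z ≤ 0}

/-- The `z*`-subdifferential of `f` at `x₀`. -/
def subdiff [TopologicalSpace X] [AddCommGroup X] [Module ℝ X]
    [TopologicalSpace Z] [AddCommGroup Z] [Module ℝ Z]
    (zs : Z →L[ℝ] ℝ) (f : X → Set Z) (x₀ : X) : Set (X →L[ℝ] ℝ) :=
  {xs | ∀ x : X, dirDer zs f x₀ x ⊆ Sfun xs zs x}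

/-- Scalarization `φ_{f,z*}(x) = inf{−z*(z) : z ∈ f(x)}` taking values in `EReal`. -/
def scalFn [TopologicalSpace Z] [AddCommGroup Z] [Module ℝ Z]
    (zs : Z →L[ℝ] ℝ) (f : X → Set Z) (x : X) : EReal :=
  ⨅ z ∈ f x, ((-(zs z) : ℝ) : EReal)

/-- Inf-residuation on `EReal`: `r −• s = inf {t ∈ ℝ : r ≤ s + t}`. -/
def eresid (r s : EReal) : EReal :=
  sInf {t : EReal | ∃ t' : ℝ, t = (t' : EReal) ∧ r ≤ s + (t' : EReal)}

/-- Scalar directional derivative `φ'_{f,z*}(x₀,x) = inf_{t>0} (1/t)(φ(x₀+tx) −• φ(x₀))`. -/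
def scalDer [AddCommGroup X] [Module ℝ X] [TopologicalSpace Z] [AddCommGroup Z] [Module ℝ Z]
    (zs : Z →L[ℝ] ℝ) (f : X → Set Z) (x₀ x : X) : EReal :=
  ⨅ t ∈ Ioi (0:ℝ), (((1 / t : ℝ) : EReal) * eresid (scalFn zs f (x₀ + t • x)) (scalFn zs f x₀))

/-- Inf-translation `f̂(x; M) = cl co ⋃_{m ∈ M} f(m + x)`. -/
def infTrans [AddCommGroup X] [TopologicalSpace Z] [AddCommGroup Z] [Module ℝ Z]
    (f : X → Set Z) (M : Set X) (x : X) : Set Z :=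
  closure (convexHull ℝ (⋃ m ∈ M, f (m + x)))

end

/-!
Fix a functional `zs` and let `σ S = ⨆ s ∈ S, zs s ∈ [-∞, ∞]`. Both sides of the inclusion are
closed half-spaces `{z | zs z ≤ r}`: writing `a, b, d` for `σ A, σ B, σ D`, the left one has
level `r = -(d - a) + b` and the right one has level `r = -(d - (a + b))`. As `zs ≠ 0`, such a
half-space determines its level, so the theorem compares two expressions in `EReal`, which can
differ only through the conventions for sums of infinite values.
-/

-- `-(d - a)` rather than `a - d`: the two differ at `⊤ - ⊤` and `⊥ - ⊥`, where the largest `t`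
-- with `d + t ≤ a` is `⊤` while `a - d = ⊥`.
lemma add_coe_le_iff_coe_le_neg_sub (a d : EReal) (t : ℝ) :
    d + t ≤ a ↔ (t : EReal) ≤ -(d - a) := by
  induction d <;> induction a
  case coe.coe d a =>
    norm_cast
    rw [neg_sub, le_sub_iff_add_le']
  all_goals simp

lemma neg_sub_add_le_neg_sub_add (a b d : EReal) : -(d - a) + b ≤ -(d - (a + b)) := by
  induction a <;> induction b <;> induction d
  case coe.coe.coe a b d =>
    norm_cast
    linarith
  all_goals simp [← EReal.coe_add, ← EReal.coe_sub, ← EReal.coe_neg]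

lemma neg_sub_add_lt_neg_sub_add_iff (a b d : EReal) :
    -(d - a) + b < -(d - (a + b)) ↔
      (b = ⊥ ∧ d = ⊥) ∨ (b = ⊤ ∧ d = ⊤ ∧ a ≠ ⊤ ∧ a ≠ ⊥) := by
  induction a <;> induction b <;> induction d
  case coe.coe.coe a b d =>
    have heq : -((d : EReal) - a) + b = -(d - (a + b)) := by
      norm_cast
      ring
    rw [heq]
    simp
  all_goals simp [← EReal.coe_add, ← EReal.coe_sub, ← EReal.coe_neg]

section SupportFunction

variable {Z : Type*} [AddCommGroup Z] [Module ℝ Z] [TopologicalSpace Z]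
  (zs : Z →L[ℝ] ℝ) {A B D S : Set Z} {r : EReal}

/-- The support function of `S` in the direction `zs`, that is the supremum of `zs` over `S`;
it is `⊥` on the empty set and `⊤` when `zs` is unbounded above on `S`. -/
noncomputable def supportFn (S : Set Z) : EReal :=
  ⨆ s ∈ S, (zs s : EReal)

/-- The closed half-space of the points where `zs` is at most `r`. The level `r` is extended
real, so that the empty set (`r = ⊥`) and the whole space (`r = ⊤`) are included. -/
def halfSpace (r : EReal) : Set Z :=
  {z | (zs z : EReal) ≤ r}

variable {zs}

lemma mem_halfSpace {z : Z} : z ∈ halfSpace zs r ↔ (zs z : EReal) ≤ r :=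
  Iff.rfl

lemma supportFn_le_iff : supportFn zs S ≤ r ↔ S ⊆ halfSpace zs r :=
  iSup₂_le_iff

lemma lt_supportFn_iff : r < supportFn zs S ↔ ∃ s ∈ S, r < (zs s : EReal) := by
  simp only [supportFn, lt_iSup_iff, exists_prop]

lemma le_supportFn {s : Z} (hs : s ∈ S) : (zs s : EReal) ≤ supportFn zs S :=
  supportFn_le_iff.1 le_rfl hs

lemma supportFn_eq_bot_iff : supportFn zs S = ⊥ ↔ S = ∅ := by
  simp [supportFn, eq_empty_iff_forall_notMem]

lemma isClosed_halfSpace : IsClosed (halfSpace zs r) :=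
  isClosed_le (continuous_coe_real_ereal.comp zs.continuous) continuous_const

lemma supportFn_closure : supportFn zs (closure S) = supportFn zs S :=
  eq_of_forall_ge_iff fun _ ↦ by
    simp only [supportFn_le_iff, isClosed_halfSpace.closure_subset_iff]

lemma supportFn_add : supportFn zs (A + B) = supportFn zs A + supportFn zs B := by
  apply le_antisymm
  · rw [supportFn_le_iff]
    rintro _ ⟨a, ha, b, hb, rfl⟩
    simpa [mem_halfSpace] using add_le_add (le_supportFn (zs := zs) ha) (le_supportFn hb)
  · refine EReal.add_le_of_forall_lt fun u hu v hv ↦ ?_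
    obtain ⟨a, ha, hua⟩ := lt_supportFn_iff.1 hu
    obtain ⟨b, hb, hvb⟩ := lt_supportFn_iff.1 hv
    calc u + v ≤ zs a + zs b := add_le_add hua.le hvb.le
      _ = zs (a + b) := by simp
      _ ≤ supportFn zs (A + B) := le_supportFn (add_mem_add ha hb)

lemma supportFn_oplus : supportFn zs (oplus A B) = supportFn zs A + supportFn zs B :=
  supportFn_closure.trans supportFn_add

lemma mem_add_Hset_iff {z : Z} : z ∈ S + Hset zs ↔ ∃ s ∈ S, zs z ≤ zs s := by
  constructor
  · rintro ⟨s, hs, h, hh : zs h ≤ 0, rfl⟩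
    exact ⟨s, hs, by simpa using hh⟩
  · rintro ⟨s, hs, hle⟩
    exact ⟨s, hs, z - s, by simpa [Hset] using hle, add_sub_cancel s z⟩

lemma add_Hset_subset_halfSpace : S + Hset zs ⊆ halfSpace zs (supportFn zs S) := by
  intro z hz
  obtain ⟨s, hs, hle⟩ := mem_add_Hset_iff.1 hz
  exact (EReal.coe_le_coe_iff.2 hle).trans (le_supportFn hs)

lemma halfSpace_add_Hset : halfSpace zs r + Hset zs = halfSpace zs r := by
  apply Subset.antisymm
  · exact add_Hset_subset_halfSpace.trans fun _ hz ↦ hz.trans (supportFn_le_iff.2 Subset.rfl)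
  · exact fun z hz ↦ ⟨z, hz, 0, by simp [Hset], add_zero z⟩

lemma supportFn_halfSpace (hzs : zs ≠ 0) (r : EReal) : supportFn zs (halfSpace zs r) = r := by
  refine le_antisymm (supportFn_le_iff.2 Subset.rfl) (EReal.ge_of_forall_gt_iff_ge.1 fun t ht ↦ ?_)
  obtain ⟨z, rfl⟩ : ∃ z, zs z = t :=
    LinearMap.surjective (f := (zs : Z →ₗ[ℝ] ℝ)) (by exact_mod_cast hzs) t
  exact le_supportFn ht.le

lemma strictMono_halfSpace (hzs : zs ≠ 0) : StrictMono (halfSpace zs) :=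
  Monotone.strictMono_of_injective (fun _ _ hrs _ hz ↦ le_trans hz hrs)
    (Function.LeftInverse.injective (supportFn_halfSpace hzs))

lemma halfSpace_eq_univ_iff (hzs : zs ≠ 0) : halfSpace zs r = univ ↔ r = ⊤ := by
  have htop : halfSpace zs ⊤ = univ := eq_univ_of_forall fun _ ↦ mem_halfSpace.2 le_top
  rw [← htop, (strictMono_halfSpace hzs).injective.eq_iff]

lemma halfSpace_eq_empty_iff (hzs : zs ≠ 0) : halfSpace zs r = ∅ ↔ r = ⊥ := by
  rw [← supportFn_eq_bot_iff, supportFn_halfSpace hzs]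

section ContinuousOperations

variable [ContinuousAdd Z] [ContinuousSMul ℝ Z]

lemma oplus_Hset_eq_halfSpace : oplus S (Hset zs) = halfSpace zs (supportFn zs S) := by
  refine Subset.antisymm (closure_minimal add_Hset_subset_halfSpace isClosed_halfSpace) ?_
  intro z hz
  by_cases hmem : z ∈ S + Hset zs
  · exact subset_closure hmem
  have hlt : ∀ s ∈ S, zs s < zs z := by simpa [mem_add_Hset_iff] using hmem
  obtain ⟨s₀, hs₀⟩ : S.Nonempty := by
    rw [nonempty_iff_ne_empty, Ne, ← supportFn_eq_bot_iff (zs := zs)]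
    exact ((EReal.bot_lt_coe _).trans_le hz).ne'
  -- Moving from `z` towards `s₀` strictly decreases `zs`, hence stays in `S + Hset zs`.
  have hseg : openSegment ℝ z s₀ ⊆ S + Hset zs := by
    rintro _ ⟨u, v, -, hv, huv, rfl⟩
    have hdecr : zs (u • z + v • s₀) < zs z := by
      calc zs (u • z + v • s₀) = u * zs z + v * zs s₀ := by simp
        _ < u * zs z + v * zs z := by gcongr; exact hlt s₀ hs₀
        _ = zs z := by rw [← add_mul, huv, one_mul]
    obtain ⟨s, hs, hs_lt⟩ := lt_supportFn_iff.1 ((EReal.coe_lt_coe_iff.2 hdecr).trans_le hz)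
    exact mem_add_Hset_iff.2 ⟨s, hs, (EReal.coe_lt_coe_iff.1 hs_lt).le⟩
  exact closure_mono hseg (segment_subset_closure_openSegment (left_mem_segment ℝ z s₀))

lemma mem_resid_iff {z : Z} :
    z ∈ resid zs A D ↔ supportFn zs D + zs z ≤ supportFn zs A := by
  rw [← EReal.le_sub_iff_add_le (by simp) (by simp), supportFn_le_iff]
  refine forall₂_congr fun d _ ↦ ?_
  simp [oplus_Hset_eq_halfSpace, mem_halfSpace, EReal.le_sub_iff_add_le]

lemma resid_eq_halfSpace :
    resid zs A D = halfSpace zs (-(supportFn zs D - supportFn zs A)) := by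
  ext z
  rw [mem_resid_iff, add_coe_le_iff_coe_le_neg_sub, mem_halfSpace]

lemma halfSpace_oplus (hzs : zs ≠ 0) :
    oplus (halfSpace zs r) B = halfSpace zs (r + supportFn zs B) :=
  calc oplus (halfSpace zs r) B = oplus (halfSpace zs r + B) (Hset zs) := by
        rw [oplus, oplus, add_right_comm, halfSpace_add_Hset]
    _ = halfSpace zs (r + supportFn zs B) := by
        rw [oplus_Hset_eq_halfSpace, supportFn_add, supportFn_halfSpace hzs]

end ContinuousOperations

end SupportFunction

theorem stmt5_general {Z : Type*} [AddCommGroup Z] [Module ℝ Z] [TopologicalSpace Z]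
    [ContinuousAdd Z] [ContinuousSMul ℝ Z] (zs : Z →L[ℝ] ℝ) (hzs : zs ≠ 0) (A B D : Set Z) :
    oplus (resid zs A D) B ⊆ resid zs (oplus A B) D ∧
    (oplus (resid zs A D) B ⊂ resid zs (oplus A B) D ↔
      (B = ∅ ∧ D = ∅) ∨
        (oplus B (Hset zs) = univ ∧ oplus D (Hset zs) = univ ∧
          oplus A (Hset zs) ≠ univ ∧ oplus A (Hset zs) ≠ ∅)) := by
  have hmono := strictMono_halfSpace hzs
  simp only [oplus_Hset_eq_halfSpace, halfSpace_eq_univ_iff hzs, halfSpace_eq_empty_iff hzs, ne_eq,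
    ← supportFn_eq_bot_iff (zs := zs), resid_eq_halfSpace, halfSpace_oplus hzs, supportFn_oplus]
  exact ⟨hmono.monotone (neg_sub_add_le_neg_sub_add ..),
    hmono.lt_iff_lt.trans (neg_sub_add_lt_neg_sub_add_iff ..)⟩

theorem stmt5 {Z : Type*} [AddCommGroup Z] [Module ℝ Z] [TopologicalSpace Z]
    [IsTopologicalAddGroup Z] [ContinuousSMul ℝ Z] [LocallyConvexSpace ℝ Z]
    (C : Set Z) (hCconv : Convex ℝ C) (hC0 : (0:Z) ∈ C)
    (hCcone : ∀ t : ℝ, 0 < t → t • C ⊆ C) (hclC : closure C ≠ Set.univ)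
    (zs : Z →L[ℝ] ℝ) (hzs : ∀ z ∈ C, zs z ≤ 0) (hzs0 : zs ≠ 0)
    (A B D : Set Z) (hA : A ∈ Gset C) (hB : B ∈ Gset C) (hD : D ∈ Gset C) :
    oplus (resid zs A D) B ⊆ resid zs (oplus A B) D ∧
    (oplus (resid zs A D) B ⊂ resid zs (oplus A B) D ↔
      (B = ∅ ∧ D = ∅) ∨
        (oplus B (Hset zs) = Set.univ ∧ oplus D (Hset zs) = Set.univ ∧
          oplus A (Hset zs) ≠ Set.univ ∧ oplus A (Hset zs) ≠ ∅)) :=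
  stmt5_general zs hzs0 A B D
end

section
/- Let f : X → G(Z,C) be convex, x₀, x ∈ X, z* ∈ C⁻ \ {0}, and let g_{z*}(t, y) = (1/t)·(f(x₀ + t y) −_{z*} f(x₀)) for t > 0. If 0 < t ≤ s, then H(z*) −_{z*} g_{z*}(s, −x) ⊇ H(z*) −_{z*} g_{z*}(t, −x) and g_{z*}(t, x) ⊇ g_{z*}(s, x). If additionally f(x₀) ⊕ H(z*) ∉ {Z, ∅}, then H(z*) −_{z*} g_{z*}(t, −x) ⊇ g_{z*}(t, x) for every t > 0. -/
open Set Topology Pointwise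

/-!
For fixed `B`, the map `x ↦ f x −_{z*} B` inherits convexity from `f`: for a single `b ∈ B`, the
point `b + (t z₁ + (1 - t) z₂)` is the convex combination of `b + z₁` and `b + z₂`, and `f ⊕ H(z*)`
is convex along with `f`. Apply this with `B = f x₀`. Since `0 ∈ f x₀ −_{z*} f x₀`, combining a
point over `x₀ + s x` with `0` gives the monotonicity of the difference quotients. Combining points
over `x₀ + t x` and `x₀ - t x` at their midpoint lands in `f x₀ −_{z*} f x₀`. This set is closed
under addition, so an element `w` with `z*(w) > 0` would translate points of `f x₀` arbitrarily far
and force `f x₀ ⊕ H(z*) = Z`; in the proper case it therefore lies in `H(z*)`.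
-/

section ConvexSV

variable {X Z : Type*} [AddCommGroup X] [Module ℝ X]
  [AddCommGroup Z] [Module ℝ Z] [TopologicalSpace Z] {f : X → Set Z}

theorem ConvexSV.smul_add_smul_mem (hf : ConvexSV f) {x₁ x₂ : X} {z₁ z₂ : Z}
    (hz₁ : z₁ ∈ f x₁) (hz₂ : z₂ ∈ f x₂) {t : ℝ} (ht₀ : 0 < t) (ht₁ : t < 1) :
    t • z₁ + (1 - t) • z₂ ∈ f (t • x₁ + (1 - t) • x₂) :=
  hf x₁ x₂ t ht₀ ht₁ <|
    subset_closure (add_mem_add (smul_mem_smul_set hz₁) (smul_mem_smul_set hz₂))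

theorem ConvexSV.of_smul_add_smul_mem (hclosed : ∀ x, IsClosed (f x))
    (hf : ∀ x₁ x₂ : X, ∀ z₁ ∈ f x₁, ∀ z₂ ∈ f x₂, ∀ t : ℝ, 0 < t → t < 1 →
      t • z₁ + (1 - t) • z₂ ∈ f (t • x₁ + (1 - t) • x₂)) :
    ConvexSV f := by
  intro x₁ x₂ t ht₀ ht₁
  refine closure_minimal ?_ (hclosed _)
  rintro _ ⟨_, ⟨z₁, hz₁, rfl⟩, _, ⟨z₂, hz₂, rfl⟩, rfl⟩
  exact hf x₁ x₂ z₁ hz₁ z₂ hz₂ t ht₀ ht₁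

theorem ConvexSV.one_div_smul_subset_one_div_smul (hf : ConvexSV f) {x₀ : X}
    (h₀ : (0 : Z) ∈ f x₀) (x : X) {t s : ℝ} (ht : 0 < t) (hts : t ≤ s) :
    (1 / s) • f (x₀ + s • x) ⊆ (1 / t) • f (x₀ + t • x) := by
  rcases hts.eq_or_lt with rfl | hlt
  · exact subset_rfl
  have hs : 0 < s := ht.trans hlt
  rintro _ ⟨z, hz, rfl⟩
  have hbase : (t / s) • (x₀ + s • x) + (1 - t / s) • x₀ = x₀ + t • x := by
    match_scalars <;> field_simp
    ring
  have hmem := hf.smul_add_smul_mem hz h₀ (div_pos ht hs) ((div_lt_one hs).2 hlt)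
  rw [hbase, smul_zero, add_zero] at hmem
  refine ⟨(t / s) • z, hmem, ?_⟩
  simp only [smul_smul]
  congr 1
  field_simp

theorem ConvexSV.oplus_const [ContinuousAdd Z] [ContinuousConstSMul ℝ Z] (hf : ConvexSV f)
    {K : Set Z} (hK : Convex ℝ K) : ConvexSV fun x => oplus (f x) K := by
  refine .of_smul_add_smul_mem (fun _ => isClosed_closure) ?_
  intro x₁ x₂ z₁ hz₁ z₂ hz₂ t ht₀ ht₁
  refine map_mem_closure₂ (f := fun y₁ y₂ : Z => t • y₁ + (1 - t) • y₂) (by fun_prop)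
    hz₁ hz₂ ?_
  rintro _ ⟨a₁, ha₁, k₁, hk₁, rfl⟩ _ ⟨a₂, ha₂, k₂, hk₂, rfl⟩
  have hk : t • k₁ + (1 - t) • k₂ ∈ K := hK hk₁ hk₂ ht₀.le (by linarith) (by ring)
  exact ⟨_, hf.smul_add_smul_mem ha₁ ha₂ ht₀ ht₁, _, hk, by module⟩

end ConvexSV

section Residuation

theorem oplus_empty_left {Z : Type*} [AddCommGroup Z] [TopologicalSpace Z] (B : Set Z) :
    oplus ∅ B = ∅ := by
  rw [oplus, empty_add, closure_empty]

variable {X Z : Type*} [AddCommGroup Z] [Module ℝ Z] [TopologicalSpace Z]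
  {zs : Z →L[ℝ] ℝ} {A B D : Set Z}

theorem convex_Hset (zs : Z →L[ℝ] ℝ) : Convex ℝ (Hset zs) :=
  convex_halfSpace_le zs.toLinearMap.isLinear 0

theorem zero_mem_Hset (zs : Z →L[ℝ] ℝ) : (0 : Z) ∈ Hset zs :=
  (map_zero zs).le

theorem add_mem_Hset {z w : Z} (hz : z ∈ Hset zs) (hw : w ∈ Hset zs) : z + w ∈ Hset zs :=
  (map_add zs z w).trans_le (add_nonpos hz hw)

theorem smul_mem_Hset {c : ℝ} (hc : 0 ≤ c) {z : Z} (hz : z ∈ Hset zs) : c • z ∈ Hset zs :=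
  (map_smul zs c z).trans_le (mul_nonpos_of_nonneg_of_nonpos hc hz)

theorem subset_oplus_Hset (zs : Z →L[ℝ] ℝ) (A : Set Z) : A ⊆ oplus A (Hset zs) :=
  (subset_add_left A (zero_mem_Hset zs)).trans subset_closure

theorem resid_subset_resid_right (zs : Z →L[ℝ] ℝ) (A : Set Z) (h : B ⊆ D) :
    resid zs A D ⊆ resid zs A B :=
  fun _ hz b hb => hz b (h hb)

theorem zero_mem_resid_self (zs : Z →L[ℝ] ℝ) (A : Set Z) : (0 : Z) ∈ resid zs A A :=
  fun a ha => (add_zero a).symm ▸ subset_oplus_Hset zs A ha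

section ContinuousAdd

variable [ContinuousAdd Z]

theorem isClosed_resid (zs : Z →L[ℝ] ℝ) (A B : Set Z) : IsClosed (resid zs A B) := by
  simp only [resid, ofPred_forall]
  exact isClosed_biInter fun b _ => isClosed_closure.preimage (continuous_const_add b)

theorem add_mem_oplus_Hset {z h : Z} (hz : z ∈ oplus A (Hset zs)) (hh : h ∈ Hset zs) :
    z + h ∈ oplus A (Hset zs) := by
  refine map_mem_closure (f := (· + h)) (continuous_add_const h) hz ?_
  rintro _ ⟨a, ha, k, hk, rfl⟩
  exact ⟨a, ha, k + h, add_mem_Hset hk hh, (add_assoc a k h).symm⟩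

theorem add_mem_oplus_of_mem_resid {y z : Z} (hz : z ∈ resid zs A B)
    (hy : y ∈ oplus B (Hset zs)) : y + z ∈ oplus A (Hset zs) := by
  refine closure_minimal ?_ (isClosed_closure.preimage (continuous_add_const z)) hy
  rintro _ ⟨b, hb, h, hh, rfl⟩
  rw [mem_preimage, add_right_comm]
  exact add_mem_oplus_Hset (hz b hb) hh

theorem add_mem_resid {z w : Z} (hz : z ∈ resid zs A B) (hw : w ∈ resid zs B D) :
    w + z ∈ resid zs A D := fun d hd => by
  simpa only [add_assoc] using add_mem_oplus_of_mem_resid hz (hw d hd)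

theorem nsmul_mem_resid_self {w : Z} (hw : w ∈ resid zs A A) (n : ℕ) :
    n • w ∈ resid zs A A := by
  induction n with
  | zero => simpa only [zero_nsmul] using zero_mem_resid_self zs A
  | succ n ih => simpa only [succ_nsmul] using add_mem_resid hw ih

theorem resid_self_subset_Hset (hne : A.Nonempty) (hA : oplus A (Hset zs) ≠ univ) :
    resid zs A A ⊆ Hset zs := by
  intro w hw
  by_contra hnot
  have hpos : 0 < zs w := not_le.1 hnot
  obtain ⟨a, ha⟩ := hne
  refine hA (eq_univ_of_forall fun z => ?_)
  obtain ⟨n, hn⟩ := Archimedean.arch (zs (z - a)) hpos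
  have hmem : a + n • w ∈ oplus A (Hset zs) := nsmul_mem_resid_self hw n a ha
  have hrest : z - a - n • w ∈ Hset zs := by
    simpa only [Hset, mem_ofPred_eq, map_sub _ (z - a), map_nsmul, sub_nonpos] using hn
  convert add_mem_oplus_Hset hmem hrest using 1
  abel

theorem ConvexSV.resid_const [ContinuousConstSMul ℝ Z] [AddCommGroup X] [Module ℝ X]
    {f : X → Set Z} (hf : ConvexSV f) (zs : Z →L[ℝ] ℝ) (B : Set Z) :
    ConvexSV fun x => resid zs (f x) B := by
  refine .of_smul_add_smul_mem (fun _ => isClosed_resid zs _ B) ?_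
  intro x₁ x₂ z₁ hz₁ z₂ hz₂ t ht₀ ht₁ b hb
  convert (hf.oplus_const (convex_Hset zs)).smul_add_smul_mem (hz₁ b hb) (hz₂ b hb) ht₀ ht₁
    using 1
  module

end ContinuousAdd

end Residuation

section DifferenceQuotient

variable {X Z : Type*} [AddCommGroup X] [Module ℝ X]
  [AddCommGroup Z] [Module ℝ Z] [TopologicalSpace Z]

/-- The difference quotient `g_{z*}(t, y) = (1/t) (f(x₀ + t y) −_{z*} f(x₀))` of `f` at `x₀`,
meaningful for `t > 0`. -/
def diffQuot (zs : Z →L[ℝ] ℝ) (f : X → Set Z) (x₀ : X) (t : ℝ) (y : X) : Set Z :=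
  (1 / t) • resid zs (f (x₀ + t • y)) (f x₀)

variable [ContinuousAdd Z] [ContinuousConstSMul ℝ Z] {f : X → Set Z}

theorem diffQuot_subset_diffQuot (zs : Z →L[ℝ] ℝ) (hf : ConvexSV f) (x₀ y : X) {t s : ℝ}
    (ht : 0 < t) (hts : t ≤ s) : diffQuot zs f x₀ s y ⊆ diffQuot zs f x₀ t y :=
  (hf.resid_const zs (f x₀)).one_div_smul_subset_one_div_smul (zero_mem_resid_self zs _) y ht hts

theorem add_mem_resid_self_of_mem_resid_neg {zs : Z →L[ℝ] ℝ} (hf : ConvexSV f) {x₀ y : X}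
    {u v : Z} (hu : u ∈ resid zs (f (x₀ + y)) (f x₀)) (hv : v ∈ resid zs (f (x₀ + -y)) (f x₀)) :
    v + u ∈ resid zs (f x₀) (f x₀) := by
  have hmid := (hf.resid_const zs (f x₀)).smul_add_smul_mem hu hv one_half_pos one_half_lt_one
  have hbase : (1 / 2 : ℝ) • (x₀ + y) + (1 - 1 / 2 : ℝ) • (x₀ + -y) = x₀ := by module
  rw [hbase] at hmid
  convert nsmul_mem_resid_self hmid 2 using 1
  module

theorem diffQuot_subset_resid_diffQuot_neg {zs : Z →L[ℝ] ℝ} (hf : ConvexSV f) {x₀ : X}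
    (hne : (f x₀).Nonempty) (hproper : oplus (f x₀) (Hset zs) ≠ univ) (x : X) {t : ℝ}
    (ht : 0 < t) : diffQuot zs f x₀ t x ⊆ resid zs (Hset zs) (diffQuot zs f x₀ t (-x)) := by
  rintro _ ⟨u, hu, rfl⟩ _ ⟨v, hv, rfl⟩
  rw [smul_neg] at hv
  have hsum : v + u ∈ Hset zs :=
    resid_self_subset_Hset hne hproper (add_mem_resid_self_of_mem_resid_neg hf hu hv)
  refine subset_oplus_Hset zs _ ?_
  simpa only [smul_add] using smul_mem_Hset (one_div_pos.2 ht).le hsum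

end DifferenceQuotient

theorem stmt8_general {Z : Type*} [AddCommGroup Z] [Module ℝ Z] [TopologicalSpace Z]
    [ContinuousAdd Z] [ContinuousConstSMul ℝ Z] {X : Type*} [AddCommGroup X] [Module ℝ X]
    (zs : Z →L[ℝ] ℝ) {f : X → Set Z} (hf : ConvexSV f) (x₀ x : X) :
    (∀ t s : ℝ, 0 < t → t ≤ s →
      resid zs (Hset zs) (diffQuot zs f x₀ t (-x)) ⊆
          resid zs (Hset zs) (diffQuot zs f x₀ s (-x)) ∧
        diffQuot zs f x₀ s x ⊆ diffQuot zs f x₀ t x) ∧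
    ((oplus (f x₀) (Hset zs) ≠ Set.univ ∧ oplus (f x₀) (Hset zs) ≠ ∅) →
      ∀ t : ℝ, 0 < t →
        diffQuot zs f x₀ t x ⊆ resid zs (Hset zs) (diffQuot zs f x₀ t (-x))) := by
  refine ⟨fun t s ht hts => ⟨?_, diffQuot_subset_diffQuot zs hf x₀ x ht hts⟩, ?_⟩
  · exact resid_subset_resid_right zs _ (diffQuot_subset_diffQuot zs hf x₀ (-x) ht hts)
  · rintro ⟨hproper, hne⟩ t ht
    have hfne : (f x₀).Nonempty :=
      nonempty_iff_ne_empty.2 fun h => hne (by rw [h, oplus_empty_left])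
    exact diffQuot_subset_resid_diffQuot_neg hf hfne hproper x ht

theorem stmt8 {Z : Type*} [AddCommGroup Z] [Module ℝ Z] [TopologicalSpace Z]
    [IsTopologicalAddGroup Z] [ContinuousSMul ℝ Z] [LocallyConvexSpace ℝ Z]
    {X : Type*} [AddCommGroup X] [Module ℝ X] [TopologicalSpace X]
    [IsTopologicalAddGroup X] [ContinuousSMul ℝ X] [LocallyConvexSpace ℝ X]
    (C : Set Z) (hCconv : Convex ℝ C) (hC0 : (0:Z) ∈ C)
    (hCcone : ∀ t : ℝ, 0 < t → t • C ⊆ C) (hclC : closure C ≠ Set.univ)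
    (zs : Z →L[ℝ] ℝ) (hzs : ∀ z ∈ C, zs z ≤ 0) (hzs0 : zs ≠ 0)
    (f : X → Set Z) (hf : ConvexSV f) (hfG : ∀ x : X, f x ∈ Gset C)
    (x₀ x : X) :
    (∀ t s : ℝ, 0 < t → t ≤ s →
      resid zs (Hset zs) ((1 / t) • resid zs (f (x₀ + t • (-x))) (f x₀)) ⊆
          resid zs (Hset zs) ((1 / s) • resid zs (f (x₀ + s • (-x))) (f x₀)) ∧
        (1 / s) • resid zs (f (x₀ + s • x)) (f x₀) ⊆
          (1 / t) • resid zs (f (x₀ + t • x)) (f x₀)) ∧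
    ((oplus (f x₀) (Hset zs) ≠ Set.univ ∧ oplus (f x₀) (Hset zs) ≠ ∅) →
      ∀ t : ℝ, 0 < t →
        (1 / t) • resid zs (f (x₀ + t • x)) (f x₀) ⊆
          resid zs (Hset zs) ((1 / t) • resid zs (f (x₀ + t • (-x))) (f x₀))) :=
  stmt8_general zs hf x₀ x
end

section
/- Let f : X → G(Z,C) be convex, x₀ ∈ X and z* ∈ C⁻ \ {0}. Then ∂_{z*} f(x₀) = ∂ φ_{f,z*}(x₀), where ∂ φ_{f,z*}(x₀) = {x* ∈ X* : x*(x) ≤ φ'_{f,z*}(x₀, x) for all x ∈ X} and φ'_{f,z*}(x₀, x) = inf_{t>0} (1/t)·(φ_{f,z*}(x₀ + t x) −• φ_{f,z*}(x₀)) with the inf-residuation r −• s = inf{t ∈ ℝ : r ≤ s +• t} on ℝ ∪ {±∞} (inf-addition convention: (+∞) +• (−∞) = +∞). -/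
open Set Topology Pointwise

/-!
The set `A ⊕ H(z*)` is the preimage under `-z*` of the half-line of reals above `inf {-z*(a) : a ∈
A}`. Hence `(1/t)(f(x₀ + tx) −_{z*} f(x₀))` consists of the `z` for which `-z*(z)` bounds the
difference quotient of `φ` at step `t` from above. Convexity makes these sets increase as `t`
decreases to `0`, so `f'_{z*}(x₀, x)` is the closure of their union over all `t > 0`. Both
subdifferential inequalities then say that `x*(x)` lies below every upper bound of every difference
quotient of `φ`.
-/

section Scalarization

variable {X Z : Type*} [AddCommGroup Z] [Module ℝ Z] [TopologicalSpace Z]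
  {zs : Z →L[ℝ] ℝ} {f : X → Set Z} {x y : X}

theorem le_scalFn_iff {r : EReal} : r ≤ scalFn zs f x ↔ ∀ z ∈ f x, r ≤ ((-zs z : ℝ) : EReal) :=
  le_iInf₂_iff

theorem scalFn_lt_coe_iff {c : ℝ} : scalFn zs f x < c ↔ ∃ z ∈ f x, -zs z < c := by
  simp only [scalFn, iInf_lt_iff, EReal.coe_lt_coe_iff, exists_prop]

theorem oplus_Hset_subset (zs : Z →L[ℝ] ℝ) (f : X → Set Z) (x : X) :
    oplus (f x) (Hset zs) ⊆ {w | scalFn zs f x ≤ ((-zs w : ℝ) : EReal)} := by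
  have isClosed_superlevel : IsClosed {w : Z | scalFn zs f x ≤ ((-zs w : ℝ) : EReal)} :=
    isClosed_le continuous_const (continuous_coe_real_ereal.comp zs.continuous.neg)
  refine closure_minimal ?_ isClosed_superlevel
  rintro _ ⟨a, ha, h, hh : zs h ≤ 0, rfl⟩
  refine (le_scalFn_iff.1 le_rfl a ha).trans (EReal.coe_le_coe ?_)
  rw [map_add]
  linarith

theorem mem_add_Hset_of_scalFn_lt {w : Z} (hw : scalFn zs f x < ((-zs w : ℝ) : EReal)) :
    w ∈ f x + Hset zs := by
  obtain ⟨a, ha, haw⟩ := scalFn_lt_coe_iff.1 hw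
  refine ⟨a, ha, w - a, ?_, add_sub_cancel a w⟩
  change zs (w - a) ≤ 0
  rw [map_sub]
  linarith

theorem mem_oplus_Hset_iff [ContinuousAdd Z] [ContinuousSMul ℝ Z] (hzs : zs ≠ 0) {w : Z} :
    w ∈ oplus (f x) (Hset zs) ↔ scalFn zs f x ≤ ((-zs w : ℝ) : EReal) := by
  refine ⟨fun hw => oplus_Hset_subset zs f x hw, fun hw => ?_⟩
  obtain ⟨e, he : zs e = -1⟩ := zs.toLinearMap.surjective (by exact_mod_cast hzs) (-1)
  have tendsto_perturbation : Filter.Tendsto (fun ε : ℝ => w + ε • e) (𝓝[>] 0) (𝓝 w) := by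
    have hcont : Continuous fun ε : ℝ => w + ε • e := by fun_prop
    simpa using (hcont.tendsto 0).mono_left nhdsWithin_le_nhds
  refine mem_closure_of_tendsto tendsto_perturbation ?_
  filter_upwards [self_mem_nhdsWithin] with ε (hε : 0 < ε)
  refine mem_add_Hset_of_scalFn_lt (hw.trans_lt (EReal.coe_lt_coe ?_))
  rw [map_add, map_smul, he, smul_eq_mul]
  linarith

theorem le_scalFn_add_coe_iff {r : EReal} {c : ℝ} :
    r ≤ scalFn zs f x + c ↔ ∀ z ∈ f x, r ≤ ((-zs z + c : ℝ) : EReal) := by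
  have sub_le_iff (s : EReal) : r - c ≤ s ↔ r ≤ s + c :=
    EReal.sub_le_iff_le_add (.inl (EReal.coe_ne_bot c)) (.inl (EReal.coe_ne_top c))
  simp only [← sub_le_iff, le_scalFn_iff, EReal.coe_add]

theorem mem_resid_iff_s14 [ContinuousAdd Z] [ContinuousSMul ℝ Z] (hzs : zs ≠ 0) {z : Z} :
    z ∈ resid zs (f x) (f y) ↔ scalFn zs f x ≤ scalFn zs f y + ((-zs z : ℝ) : EReal) := by
  rw [le_scalFn_add_coe_iff]
  refine forall₂_congr fun b _ => ?_
  rw [mem_oplus_Hset_iff hzs, map_add, neg_add]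

theorem ConvexSV.convex_strictEpigraph_scalFn [AddCommGroup X] [Module ℝ X] (hf : ConvexSV f)
    (zs : Z →L[ℝ] ℝ) : Convex ℝ {p : X × ℝ | scalFn zs f p.1 < p.2} := by
  refine convex_iff_forall_pos.2 ?_
  rintro ⟨x₁, c₁⟩ h₁ ⟨x₂, c₂⟩ h₂ t s ht hs hts
  obtain rfl : s = 1 - t := by linarith
  obtain ⟨a₁, ha₁, hac₁⟩ := scalFn_lt_coe_iff.1 h₁
  obtain ⟨a₂, ha₂, hac₂⟩ := scalFn_lt_coe_iff.1 h₂
  have combo_mem : t • a₁ + (1 - t) • a₂ ∈ f (t • x₁ + (1 - t) • x₂) :=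
    hf x₁ x₂ t ht (by linarith)
      (subset_closure (add_mem_add (smul_mem_smul_set ha₁) (smul_mem_smul_set ha₂)))
  refine scalFn_lt_coe_iff.2 ⟨_, combo_mem, ?_⟩
  calc -zs (t • a₁ + (1 - t) • a₂) = t * -zs a₁ + (1 - t) * -zs a₂ := by
        simp only [map_add, map_smul, smul_eq_mul]; ring
    _ < t * c₁ + (1 - t) * c₂ := by gcongr

end Scalarization

section UpperSlopes

variable {X : Type*} [AddCommGroup X] [Module ℝ X] {φ : X → EReal} {x₀ x : X}

/-- The real upper bounds of the difference quotient `(1/t)(φ(x₀ + tx) −• φ(x₀))`, for `t > 0`.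
They carry the same information as the quotient, and the additive form avoids subtracting and
dividing infinite values. -/
def upperSlopes (φ : X → EReal) (x₀ x : X) (t : ℝ) : Set ℝ :=
  {q | φ (x₀ + t • x) ≤ φ x₀ + ((t * q : ℝ) : EReal)}

theorem upperSlopes_antitoneOn (hφ : Convex ℝ {p : X × ℝ | φ p.1 < p.2}) :
    AntitoneOn (upperSlopes φ x₀ x) (Ioi 0) := by
  rintro s (hs : 0 < s) t (ht : 0 < t) hst q (hq : φ (x₀ + t • x) ≤ φ x₀ + ((t * q : ℝ) : EReal))
  change φ (x₀ + s • x) ≤ φ x₀ + ((s * q : ℝ) : EReal)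
  rw [← EReal.sub_le_iff_le_add (.inl (EReal.coe_ne_bot _)) (.inl (EReal.coe_ne_top _))]
  refine EReal.le_of_forall_lt_iff_le.1 fun c hc => ?_
  rw [EReal.sub_le_iff_le_add (.inl (EReal.coe_ne_bot _)) (.inl (EReal.coe_ne_top _)),
    ← EReal.coe_add]
  have endpoint_mem : (x₀ + t • x, c + t * q) ∈ {p : X × ℝ | φ p.1 < p.2} := by
    refine hq.trans_lt ?_
    rw [EReal.coe_add]
    exact EReal.add_lt_add_right_coe hc _
  have combo_mem := hφ.add_smul_sub_mem (x := (x₀, c)) hc endpoint_mem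
    (t := s / t) ⟨by positivity, (div_le_one ht).2 hst⟩
  have combo_eq : (x₀, c) + (s / t) • ((x₀ + t • x, c + t * q) - (x₀, c)) =
      (x₀ + s • x, c + s * q) := by
    ext
    · simp [smul_smul, ht.ne']
    · change c + s / t * (c + t * q - c) = c + s * q
      field_simp
      ring
  rw [combo_eq] at combo_mem
  exact le_of_lt combo_mem

theorem coe_le_eresid_iff {a : ℝ} {r s : EReal} :
    (a : EReal) ≤ eresid r s ↔ ∀ q : ℝ, r ≤ s + q → a ≤ q := by
  refine ⟨fun h q hq => EReal.coe_le_coe_iff.1 (h.trans (sInf_le ⟨q, rfl, hq⟩)), fun h => ?_⟩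
  refine le_sInf ?_
  rintro _ ⟨q, rfl, hq⟩
  exact EReal.coe_le_coe (h q hq)

theorem coe_le_one_div_mul_iff {a t : ℝ} (ht : 0 < t) {r : EReal} :
    (a : EReal) ≤ ((1 / t : ℝ) : EReal) * r ↔ ((t * a : ℝ) : EReal) ≤ r := by
  rw [one_div, EReal.coe_inv, ← EReal.div_eq_inv_mul,
    EReal.le_div_iff_mul_le (EReal.coe_pos.2 ht) (EReal.coe_ne_top t), mul_comm, EReal.coe_mul]

theorem coe_le_one_div_mul_eresid_iff {a t : ℝ} (ht : 0 < t) :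
    (a : EReal) ≤ ((1 / t : ℝ) : EReal) * eresid (φ (x₀ + t • x)) (φ x₀) ↔
      a ∈ lowerBounds (upperSlopes φ x₀ x t) := by
  rw [coe_le_one_div_mul_iff ht, coe_le_eresid_iff]
  refine ⟨fun h q hq => le_of_mul_le_mul_left (h _ hq) ht, fun h q hq => ?_⟩
  have hqt : q / t ∈ upperSlopes φ x₀ x t := by
    change _ ≤ φ x₀ + ((t * (q / t) : ℝ) : EReal)
    rwa [mul_div_cancel₀ q ht.ne']
  exact (le_div_iff₀' ht).1 (h hqt)

end UpperSlopes

section DirectionalDerivative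

variable {X Z : Type*} [AddCommGroup X] [Module ℝ X]
  [AddCommGroup Z] [Module ℝ Z] [TopologicalSpace Z]
  {zs : Z →L[ℝ] ℝ} {f : X → Set Z} {x₀ x : X}

theorem coe_le_scalDer_iff {a : ℝ} :
    (a : EReal) ≤ scalDer zs f x₀ x ↔
      ∀ t ∈ Ioi (0 : ℝ), a ∈ lowerBounds (upperSlopes (scalFn zs f) x₀ x t) :=
  le_iInf₂_iff.trans <| forall₂_congr fun _ ht => coe_le_one_div_mul_eresid_iff ht

theorem biUnion_Ioo_eq_biUnion_Ioi_of_antitoneOn {α : Type*} {D : ℝ → Set α}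
    (hD : AntitoneOn D (Ioi 0)) {s : ℝ} (hs : 0 < s) :
    ⋃ t ∈ Ioo 0 s, D t = ⋃ t ∈ Ioi 0, D t := by
  refine (biUnion_subset_biUnion_left Ioo_subset_Ioi_self).antisymm (iUnion₂_subset fun t ht => ?_)
  obtain ⟨τ, hτ, hτst⟩ := exists_between (lt_min hs ht)
  exact (hD hτ ht (hτst.le.trans (min_le_right s t))).trans
    (subset_biUnion_of_mem (u := D) ⟨hτ, hτst.trans_le (min_le_left s t)⟩)

variable [ContinuousAdd Z] [ContinuousSMul ℝ Z]

theorem one_div_smul_resid_eq (hzs : zs ≠ 0) {t : ℝ} (ht : 0 < t) :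
    (1 / t) • resid zs (f (x₀ + t • x)) (f x₀) =
      {z | -zs z ∈ upperSlopes (scalFn zs f) x₀ x t} := by
  ext z
  rw [one_div, mem_inv_smul_set_iff₀ ht.ne', mem_resid_iff_s14 hzs, map_smul, smul_eq_mul, ← mul_neg]
  rfl

theorem ConvexSV.dirDer_eq_closure (hf : ConvexSV f) (hzs : zs ≠ 0) :
    dirDer zs f x₀ x =
      closure (⋃ t ∈ Ioi (0 : ℝ), {z | -zs z ∈ upperSlopes (scalFn zs f) x₀ x t}) := by
  have antitoneOn_slopes :
      AntitoneOn (fun t => {z | -zs z ∈ upperSlopes (scalFn zs f) x₀ x t}) (Ioi 0) :=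
    fun _ hs _ ht hst _ hz =>
      upperSlopes_antitoneOn (hf.convex_strictEpigraph_scalFn zs) hs ht hst hz
  calc dirDer zs f x₀ x
      = ⋂ s ∈ Ioi (0 : ℝ), closure (⋃ t ∈ Ioo 0 s,
          {z | -zs z ∈ upperSlopes (scalFn zs f) x₀ x t}) :=
        iInter₂_congr fun s _ => congrArg closure <|
          iUnion₂_congr fun t ht => one_div_smul_resid_eq hzs ht.1
    _ = ⋂ s ∈ Ioi (0 : ℝ), closure (⋃ t ∈ Ioi 0,
          {z | -zs z ∈ upperSlopes (scalFn zs f) x₀ x t}) :=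
        iInter₂_congr fun s hs => congrArg closure <|
          biUnion_Ioo_eq_biUnion_Ioi_of_antitoneOn antitoneOn_slopes hs
    _ = _ := biInter_const nonempty_Ioi _

variable [TopologicalSpace X] {xs : X →L[ℝ] ℝ}

theorem ConvexSV.dirDer_subset_Sfun_iff (hf : ConvexSV f) (hzs : zs ≠ 0) :
    dirDer zs f x₀ x ⊆ Sfun xs zs x ↔
      ∀ t ∈ Ioi (0 : ℝ), xs x ∈ lowerBounds (upperSlopes (scalFn zs f) x₀ x t) := by
  have isClosed_Sfun : IsClosed (Sfun xs zs x) :=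
    isClosed_le (continuous_const.add zs.continuous) continuous_const
  rw [hf.dirDer_eq_closure hzs, isClosed_Sfun.closure_subset_iff, iUnion₂_subset_iff]
  refine forall₂_congr fun t _ => ⟨fun h q hq => ?_, fun h z hz => ?_⟩
  · obtain ⟨z, hz : zs z = -q⟩ := zs.toLinearMap.surjective (by exact_mod_cast hzs) (-q)
    have hzS : xs x + zs z ≤ 0 := h (show -zs z ∈ _ by rwa [hz, neg_neg])
    linarith
  · exact le_neg_iff_add_nonpos_right.1 (h hz)

theorem stmt14_general (hf : ConvexSV f) (hzs : zs ≠ 0) :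
    subdiff zs f x₀ =
      {xs : X →L[ℝ] ℝ | ∀ x : X, ((xs x : ℝ) : EReal) ≤ scalDer zs f x₀ x} := by
  ext xs
  exact forall_congr' fun x => (hf.dirDer_subset_Sfun_iff hzs).trans coe_le_scalDer_iff.symm

end DirectionalDerivative

theorem stmt14 {Z : Type*} [AddCommGroup Z] [Module ℝ Z] [TopologicalSpace Z]
    [IsTopologicalAddGroup Z] [ContinuousSMul ℝ Z] [LocallyConvexSpace ℝ Z]
    {X : Type*} [AddCommGroup X] [Module ℝ X] [TopologicalSpace X]
    [IsTopologicalAddGroup X] [ContinuousSMul ℝ X] [LocallyConvexSpace ℝ X]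
    (C : Set Z) (hCconv : Convex ℝ C) (hC0 : (0:Z) ∈ C)
    (hCcone : ∀ t : ℝ, 0 < t → t • C ⊆ C) (hclC : closure C ≠ Set.univ)
    (zs : Z →L[ℝ] ℝ) (hzs : ∀ z ∈ C, zs z ≤ 0) (hzs0 : zs ≠ 0)
    (f : X → Set Z) (hf : ConvexSV f) (hfG : ∀ x : X, f x ∈ Gset C)
    (x₀ : X) :
    subdiff zs f x₀ =
      {xs : X →L[ℝ] ℝ | ∀ x : X, ((xs x : ℝ) : EReal) ≤ scalDer zs f x₀ x} :=
  stmt14_general hf hzs0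
end
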